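/- arXiv:2605.12573 — 2 statements merged into one kernel-verified Lean document; each statement's English description precedes it below -/
import Mathlib

section
/- Let (Ω, 𝔽, P) be a probability space and E a finite-dimensional real inner product space. Let η, η' : Ω → E be square-integrable with E[η] = E[η'] = 0, E[‖η‖²] = E[‖η'‖²] = v, and E[⟨η, η'⟩] = ρ · v for reals v ≥ 0 and ρ. Let μ, μ', ε ∈ E be fixed vectors, r = μ' − μ, let α_s, σ_s, β be reals, and define x^{LAMP} = α_s((1 − β)(μ + η) + β(μ' + η')) + σ_s ε and x^{μ} = α_s μ + σ_s ε. Then E[‖x^{LAMP} − x^{μ}‖²] = α_s² · [(1 − 2β(1 − β)(1 − ρ)) · v + β² · ‖r‖²]. -/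
open MeasureTheory
open scoped RealInnerProductSpace

/-- One-step risk of the LAMP update under the local stationarity model. -/
theorem lamp_one_step_risk
    {Ω : Type*} [MeasurableSpace Ω] (P : Measure Ω) [IsProbabilityMeasure P]
    {E : Type*} [NormedAddCommGroup E] [InnerProductSpace ℝ E] [FiniteDimensional ℝ E]
    (η η' : Ω → E) (hη : MemLp η 2 P) (hη' : MemLp η' 2 P)
    (hmean : ∫ ω, η ω ∂P = 0) (hmean' : ∫ ω, η' ω ∂P = 0)
    (v ρ : ℝ) (hv : 0 ≤ v)
    (hv1 : ∫ ω, ‖η ω‖ ^ 2 ∂P = v) (hv2 : ∫ ω, ‖η' ω‖ ^ 2 ∂P = v)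
    (hcov : ∫ ω, ⟪η ω, η' ω⟫ ∂P = ρ * v)
    (μ μ' ε : E) (r : E) (hr : r = μ' - μ) (αs σs β : ℝ)
    (xLAMP : Ω → E)
    (hxLAMP : ∀ ω, xLAMP ω = αs • ((1 - β) • (μ + η ω) + β • (μ' + η' ω)) + σs • ε)
    (xμ : E) (hxμ : xμ = αs • μ + σs • ε) :
    ∫ ω, ‖xLAMP ω - xμ‖ ^ 2 ∂P
      = αs ^ 2 * ((1 - 2 * β * (1 - β) * (1 - ρ)) * v + β ^ 2 * ‖r‖ ^ 2) := by
  have : CompleteSpace E := FiniteDimensional.complete ℝ E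
  have i1 : Integrable (fun ω => ‖η ω‖ ^ 2) P := hη.integrable_norm_pow (by norm_num)
  have i2 : Integrable (fun ω => ‖η' ω‖ ^ 2) P := hη'.integrable_norm_pow (by norm_num)
  have i3 : Integrable (fun ω => ‖η ω + η' ω‖ ^ 2) P :=
    (hη.add hη').integrable_norm_pow (by norm_num)
  have i4 : Integrable (fun ω => ⟪η ω, η' ω⟫) P := by
    have h := ((i3.sub i1).sub i2).div_const 2
    refine h.congr (Filter.Eventually.of_forall fun ω => ?_)
    simp only [Pi.sub_apply]
    rw [norm_add_sq_real]
    ring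
  have j1 : Integrable η P := hη.integrable (by norm_num)
  have j2 : Integrable η' P := hη'.integrable (by norm_num)
  have i5 : Integrable (fun ω => ⟪r, η ω⟫) P := j1.const_inner r
  have i6 : Integrable (fun ω => ⟪r, η' ω⟫) P := j2.const_inner r
  have e5 : ∫ ω, ⟪r, η ω⟫ ∂P = 0 := by rw [integral_inner j1, hmean, inner_zero_right]
  have e6 : ∫ ω, ⟪r, η' ω⟫ ∂P = 0 := by rw [integral_inner j2, hmean', inner_zero_right]
  have key : ∀ ω, ‖xLAMP ω - xμ‖ ^ 2 =
      (αs ^ 2 * (1 - β) ^ 2) * ‖η ω‖ ^ 2 + (αs ^ 2 * β ^ 2) * ‖η' ω‖ ^ 2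
      + (αs ^ 2 * (2 * β * (1 - β))) * ⟪η ω, η' ω⟫
      + (αs ^ 2 * (2 * β * (1 - β))) * ⟪r, η ω⟫
      + (αs ^ 2 * (2 * β ^ 2)) * ⟪r, η' ω⟫ + αs ^ 2 * (β ^ 2 * ‖r‖ ^ 2) := by
    intro ω
    have h : xLAMP ω - xμ = αs • ((1 - β) • η ω + β • η' ω + β • r) := by
      rw [hxLAMP, hxμ, hr]; module
    rw [h, norm_smul, mul_pow, norm_add_sq_real, norm_add_sq_real]
    simp only [norm_smul, mul_pow, inner_add_left, real_inner_smul_left, real_inner_smul_right,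
      Real.norm_eq_abs, sq_abs, real_inner_comm r]
    ring
  simp_rw [key]
  have k1 := i1.const_mul (αs ^ 2 * (1 - β) ^ 2)
  have k2 := i2.const_mul (αs ^ 2 * β ^ 2)
  have k3 := i4.const_mul (αs ^ 2 * (2 * β * (1 - β)))
  have k4 := i5.const_mul (αs ^ 2 * (2 * β * (1 - β)))
  have k5 := i6.const_mul (αs ^ 2 * (2 * β ^ 2))
  rw [integral_add (by exact (((k1.add k2).add k3).add k4).add k5) (integrable_const _),
    integral_add (by exact ((k1.add k2).add k3).add k4) k5,
    integral_add (by exact (k1.add k2).add k3) k4,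
    integral_add (by exact k1.add k2) k3, integral_add k1 k2]
  simp only [integral_const_mul, integral_const, hv1, hv2, hcov, e5, e6, probReal_univ, one_smul]
  ring
end

section
/- Let (Ω, 𝔽, P) be a probability space and E a finite-dimensional real inner product space. Let η, η' : Ω → E be square-integrable with E[η] = E[η'] = 0, E[‖η‖²] = E[‖η'‖²] = v, and E[⟨η, η'⟩] = ρ · v for reals v ≥ 0 and ρ. Let μ, μ', ε ∈ E be fixed vectors, r = μ' − μ, let σ_s be real, α_s ≠ 0 real, and β real with β > 0 and β · ‖r‖² < 2(1 − β)(1 − ρ) · v. Define x^{PS} = α_s(μ + η) + σ_s ε, x^{LAMP} = α_s((1 − β)(μ + η) + β(μ' + η')) + σ_s ε, and x^{μ} = α_s μ + σ_s ε. Then E[‖x^{LAMP} − x^{μ}‖²] < E[‖x^{PS} − x^{μ}‖²]. -/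
open MeasureTheory
open scoped RealInnerProductSpace

/-- One-step risk comparison: LAMP beats the base posterior sampler whenever
`β ‖r‖² < 2 (1-β)(1-ρ) v`. -/
theorem lamp_one_step_risk_comparison
    {Ω : Type*} [MeasurableSpace Ω] (P : Measure Ω) [IsProbabilityMeasure P]
    {E : Type*} [NormedAddCommGroup E] [InnerProductSpace ℝ E] [FiniteDimensional ℝ E]
    (η η' : Ω → E) (hη : MemLp η 2 P) (hη' : MemLp η' 2 P)
    (hmean : ∫ ω, η ω ∂P = 0) (hmean' : ∫ ω, η' ω ∂P = 0)
    (v ρ : ℝ) (hv : 0 ≤ v)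
    (hv1 : ∫ ω, ‖η ω‖ ^ 2 ∂P = v) (hv2 : ∫ ω, ‖η' ω‖ ^ 2 ∂P = v)
    (hcov : ∫ ω, ⟪η ω, η' ω⟫ ∂P = ρ * v)
    (μ μ' ε : E) (r : E) (hr : r = μ' - μ) (σs : ℝ) (αs : ℝ) (hαs : αs ≠ 0)
    (β : ℝ) (hβ : 0 < β)
    (hcond : β * ‖r‖ ^ 2 < 2 * (1 - β) * (1 - ρ) * v)
    (xPS : Ω → E) (hxPS : ∀ ω, xPS ω = αs • (μ + η ω) + σs • ε)
    (xLAMP : Ω → E)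
    (hxLAMP : ∀ ω, xLAMP ω = αs • ((1 - β) • (μ + η ω) + β • (μ' + η' ω)) + σs • ε)
    (xμ : E) (hxμ : xμ = αs • μ + σs • ε) :
    ∫ ω, ‖xLAMP ω - xμ‖ ^ 2 ∂P < ∫ ω, ‖xPS ω - xμ‖ ^ 2 ∂P := by
  have iη : Integrable η P := hη.integrable (by norm_num)
  have iη' : Integrable η' P := hη'.integrable (by norm_num)
  have i1 : Integrable (fun ω => ‖η ω‖ ^ 2) P := hη.integrable_norm_pow (by norm_num)
  have i2 : Integrable (fun ω => ‖η' ω‖ ^ 2) P := hη'.integrable_norm_pow (by norm_num)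
  have isum : Integrable (fun ω => ‖η ω + η' ω‖ ^ 2) P :=
    (hη.add hη').integrable_norm_pow (by norm_num)
  have i3 : Integrable (fun ω => ⟪η ω, η' ω⟫) P := by
    have h := ((isum.sub i1).sub i2).const_mul (1 / 2)
    refine h.congr (Filter.Eventually.of_forall fun ω => ?_)
    have := norm_add_sq_real (η ω) (η' ω)
    simp only [Pi.sub_apply]
    linarith
  have i4 : Integrable (fun ω => ⟪r, η ω⟫) P := iη.const_inner r
  have i5 : Integrable (fun ω => ⟪r, η' ω⟫) P := iη'.const_inner r
  have e4 : ∫ ω, ⟪r, η ω⟫ ∂P = 0 := by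
    rw [integral_inner iη r, hmean, inner_zero_right]
  have e5 : ∫ ω, ⟪r, η' ω⟫ ∂P = 0 := by
    rw [integral_inner iη' r, hmean', inner_zero_right]
  have hPS : ∀ ω, ‖xPS ω - xμ‖ ^ 2 = αs ^ 2 * ‖η ω‖ ^ 2 := by
    intro ω
    have : xPS ω - xμ = αs • η ω := by rw [hxPS, hxμ]; module
    rw [this, norm_smul, mul_pow, Real.norm_eq_abs, sq_abs]
  have hL : ∀ ω, ‖xLAMP ω - xμ‖ ^ 2 =
      (αs ^ 2 * (1 - β) ^ 2) * ‖η ω‖ ^ 2 + (αs ^ 2 * β ^ 2) * ‖η' ω‖ ^ 2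
      + (αs ^ 2 * (2 * β * (1 - β))) * ⟪η ω, η' ω⟫
      + (αs ^ 2 * (2 * β * (1 - β))) * ⟪r, η ω⟫
      + (αs ^ 2 * (2 * β ^ 2)) * ⟪r, η' ω⟫ + αs ^ 2 * β ^ 2 * ‖r‖ ^ 2 := by
    intro ω
    have : xLAMP ω - xμ = αs • ((1 - β) • η ω + β • η' ω + β • r) := by
      rw [hxLAMP, hxμ, hr]; module
    rw [this, norm_smul, mul_pow, Real.norm_eq_abs, sq_abs, norm_add_sq_real, norm_add_sq_real]
    simp only [norm_smul, mul_pow, Real.norm_eq_abs, sq_abs, inner_add_left,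
      real_inner_smul_left, real_inner_smul_right]
    rw [real_inner_comm r (η ω), real_inner_comm r (η' ω)]
    ring
  simp_rw [hPS, hL]
  have j1 := i1.const_mul (αs ^ 2 * (1 - β) ^ 2)
  have j2 := i2.const_mul (αs ^ 2 * β ^ 2)
  have j3 := i3.const_mul (αs ^ 2 * (2 * β * (1 - β)))
  have j4 := i4.const_mul (αs ^ 2 * (2 * β * (1 - β)))
  have j5 := i5.const_mul (αs ^ 2 * (2 * β ^ 2))
  rw [integral_add (by fun_prop) (by fun_prop), integral_add (by fun_prop) (by fun_prop),
    integral_add (by fun_prop) (by fun_prop), integral_add (by fun_prop) (by fun_prop),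
    integral_add (by fun_prop) (by fun_prop)]
  simp only [integral_const_mul, hv1, hv2, hcov, e4, e5, integral_const, probReal_univ,
    one_smul]
  have hα : 0 < αs ^ 2 * β := by positivity
  have := mul_lt_mul_of_pos_left hcond hα
  linarith
end
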